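/- arXiv:1307.2767 — 2 statements merged into one kernel-verified Lean document; each statement's English description precedes it below -/
import Mathlib

section
/- Let k ≥ 2, n ≥ 3, and m ≥ 1 be integers with 3 ∣ n, and assume either (k is odd and m ≥ 2) or (k is even and m = 1). Then G(k,n,m)/F_n^{k+m-1} ≡ (F_{n-3}/2)^{k-1} (mod F_n). (Note that 3 ∣ n implies 3 ∣ (n-3), hence F_{n-3} is even, so F_{n-3}/2 is an integer.) -/
/-- `G n m k` is the sequence from the paper: `G(1,n,m) = F_n^m`,
`G(k+1,n,m) = F_{n·G(k,n,m)}`. The value at `k = 0` is junk. -/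
def G (n m : ℕ) : ℕ → ℕ
  | 0 => 1
  | 1 => Nat.fib n ^ m
  | (k+2) => Nat.fib (n * G n m (k+1))

/-!
Write `F = F_n`, `a = F_{n-1}` and `c = F_{n-3} / 2`. Raising `φ ^ n = F φ + a` to the power `N`
gives `F_{nN} = ∑ j, N.choose j * F ^ j * a ^ (N - j) * F_j`. If `F ^ r ∣ N`, the terms with `3 ≤ j`
vanish modulo `F ^ (r + 2)`, and for even `F` and `N` the two remaining ones add up to
`N F (a ^ (N - 1) + F / 2)`. Since `a ^ 2 ≡ (-1) ^ n` modulo `F` by Cassini's identity and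
`a = c + F / 2`, the last factor is `± c` modulo `F`, so each step of the recursion multiplies the
leading term by `± F c`. The sign is `(-1) ^ n`, except that it is `+` for the step from
`G(1,n,1) = F` to `G(2,n,1)`.
-/

section Divisibility

lemma dvd_pow_of_dvd_pow_of_lt_two_pow {d e r s : ℕ} (he : e ≠ 0) (hdvd : e ∣ d ^ r)
    (hlt : e < 2 ^ (s + 1)) : e ∣ d ^ s := by
  rw [Nat.dvd_iff_prime_pow_dvd_dvd]
  intro p k hp hpk
  rcases eq_or_ne k 0 with rfl | hk
  · simp
  have hpd : p ∣ d := hp.dvd_of_dvd_pow ((dvd_pow_self p hk).trans (hpk.trans hdvd))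
  have hks : k < s + 1 := by
    rw [← Nat.pow_lt_pow_iff_right (le_refl 2)]
    calc 2 ^ k ≤ p ^ k := Nat.pow_le_pow_left hp.two_le k
      _ ≤ e := Nat.le_of_dvd (Nat.pos_of_ne_zero he) hpk
      _ < 2 ^ (s + 1) := hlt
  exact pow_dvd_pow_of_dvd_of_le hpd (Nat.le_of_lt_succ hks)

lemma dvd_choose_mul {d N : ℕ} (hN : d ∣ N) (j : ℕ) : d ∣ N.choose j * j := by
  rcases N, j with ⟨_ | N, _ | j⟩
  case succ.succ =>
    rw [← Nat.add_one_mul_choose_eq]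
    exact hN.mul_right _
  all_goals simp

lemma pow_add_two_dvd_choose_mul_pow {d r N j : ℕ} (hN : d ^ r ∣ N) (hj : 3 ≤ j) :
    d ^ (r + 2) ∣ N.choose j * d ^ j := by
  obtain ⟨i, rfl⟩ := Nat.exists_eq_add_of_le' hj
  have hgcd : Nat.gcd (i + 3) (d ^ r) ∣ d ^ (i + 1) := by
    refine dvd_pow_of_dvd_pow_of_lt_two_pow (Nat.gcd_pos_of_pos_left _ (by lia)).ne'
      (Nat.gcd_dvd_right _ _) ?_
    calc Nat.gcd (i + 3) (d ^ r) ≤ i + 3 := Nat.gcd_le_left _ (by lia)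
      _ < 2 ^ (i + 1 + 1) := by
        have hi : i < 2 ^ i := Nat.lt_two_pow_self
        lia
  have hchoose : d ^ r ∣ N.choose (i + 3) * Nat.gcd (i + 3) (d ^ r) := by
    rw [← Nat.gcd_mul_left]
    exact Nat.dvd_gcd (dvd_choose_mul hN _) (dvd_mul_left _ _)
  rw [pow_add d r 2, show i + 3 = i + 1 + 2 from rfl, pow_add d (i + 1) 2, ← mul_assoc]
  exact mul_dvd_mul_right (hchoose.trans (mul_dvd_mul_left _ hgcd)) _

lemma div_modEq_of_modEq_mul {a b c x : ℕ} (hb : b ≠ 0) (h : a ≡ b * x [MOD b * c]) :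
    a / b ≡ x [MOD c] := by
  obtain ⟨q, rfl⟩ : b ∣ a := (h.dvd_iff (dvd_mul_right b c)).2 (dvd_mul_right b x)
  rw [Nat.mul_div_cancel_left q (Nat.pos_of_ne_zero hb)]
  exact h.mul_left_cancel' hb

lemma mul_modEq_mul_of_dvd {d b x y s : ℤ} (h : x ≡ y [ZMOD s]) (hdb : d ∣ b) :
    b * x ≡ b * y [ZMOD d * s] :=
  h.mul_left'.of_dvd (mul_dvd_mul_right hdb s)

end Divisibility

section Fibonacci

open Nat (fib)

open scoped goldenRatio in
lemma fib_mul_eq_sum (n N : ℕ) :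
    fib ((n + 1) * N) =
      ∑ j ∈ Finset.range (N + 1), N.choose j * fib (n + 1) ^ j * fib n ^ (N - j) * fib j := by
  rify
  calc (fib ((n + 1) * N) : ℝ)
      = ((φ * fib (n + 1) + fib n) ^ N - (ψ * fib (n + 1) + fib n) ^ N) / √5 := by
        rw [Real.coe_fib_eq, pow_mul, pow_mul, Real.goldenRatio_mul_fib_succ_add_fib,
          Real.goldenConj_mul_fib_succ_add_fib]
    _ = _ := by
        rw [add_pow, add_pow, ← Finset.sum_sub_distrib, Finset.sum_div]
        refine Finset.sum_congr rfl fun j _ ↦ ?_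
        rw [Real.coe_fib_eq j, mul_pow, mul_pow]
        ring

lemma fib_mul_modEq {n r N : ℕ} (hN : fib (n + 1) ^ r ∣ N) :
    fib ((n + 1) * N) ≡
      N * fib (n + 1) * fib n ^ (N - 1) + N.choose 2 * fib (n + 1) ^ 2 * fib n ^ (N - 2)
      [MOD fib (n + 1) ^ (r + 2)] := by
  obtain rfl | rfl | ⟨M, rfl⟩ : N = 0 ∨ N = 1 ∨ ∃ M, N = M + 2 := by
    rcases N with _ | _ | M <;> simp
  · simp [Nat.ModEq.refl]
  · simp [Nat.ModEq.refl]
  set tail := ∑ j ∈ Finset.range M, (M + 2).choose (j + 3) * fib (n + 1) ^ (j + 3) *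
    fib n ^ (M + 2 - (j + 3)) * fib (j + 3) with tail_def
  have htail : tail ≡ 0 [MOD fib (n + 1) ^ (r + 2)] :=
    Nat.modEq_zero_iff_dvd.2 <| Finset.dvd_sum fun j _ ↦
      ((pow_add_two_dvd_choose_mul_pow hN (by lia)).mul_right _).mul_right _
  have hsplit : fib ((n + 1) * (M + 2)) = tail + ((M + 2) * fib (n + 1) * fib n ^ (M + 1) +
      (M + 2).choose 2 * fib (n + 1) ^ 2 * fib n ^ M) := by
    rw [fib_mul_eq_sum, Finset.sum_range_succ', Finset.sum_range_succ', Finset.sum_range_succ']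
    simp only [tail_def, zero_add, add_zero, mul_zero, mul_one, one_mul, pow_zero, pow_one,
      Nat.reduceAdd, Nat.reduceSubDiff, Nat.add_one_sub_one, add_tsub_cancel_right, tsub_zero,
      Nat.choose_zero_right, Nat.choose_one_right, Nat.fib_zero, Nat.fib_one, Nat.fib_two]
    ring
  rw [hsplit]
  simpa only [zero_add, Nat.add_sub_cancel, Nat.add_one_sub_one] using htail.add_right _

lemma fib_mul_modEq_of_even {n r N : ℕ} (hF : Even (fib (n + 1))) (hN : Even N)
    (hdvd : fib (n + 1) ^ r ∣ N) :
    fib ((n + 1) * N) ≡ N * fib (n + 1) * (fib n ^ (N - 1) + fib (n + 1) / 2)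
      [MOD fib (n + 1) ^ (r + 2)] := by
  rcases N.eq_zero_or_pos with rfl | hNpos
  · simp [Nat.ModEq.refl]
  have ha : Odd (fib n) :=
    Nat.Coprime.odd_of_right <| (Nat.fib_coprime_fib_succ n).coprime_dvd_right hF.two_dvd
  obtain ⟨w, hw⟩ : Odd ((N - 1) * fib n ^ (N - 2)) := (Nat.Even.sub_odd hNpos hN odd_one).mul ha.pow
  have hchoose : N.choose 2 * 2 = N * (N - 1) := by
    rw [Nat.choose_two_right, Nat.div_mul_cancel (Nat.even_mul_pred_self N).two_dvd]
  obtain ⟨f, hf⟩ := hF.two_dvd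
  have hvanish : N * fib (n + 1) ^ 2 * w ≡ 0 [MOD fib (n + 1) ^ (r + 2)] :=
    Nat.modEq_zero_iff_dvd.2 <| by
      rw [pow_add]
      exact (mul_dvd_mul_right hdvd _).mul_right w
  have hquad : N.choose 2 * fib (n + 1) ^ 2 * fib n ^ (N - 2) =
      N * fib (n + 1) * (fib (n + 1) / 2) + N * fib (n + 1) ^ 2 * w := by
    calc N.choose 2 * fib (n + 1) ^ 2 * fib n ^ (N - 2)
        = N.choose 2 * 2 * fib n ^ (N - 2) * fib (n + 1) * f := by rw [hf]; ring
      _ = N * ((N - 1) * fib n ^ (N - 2)) * fib (n + 1) * f := by rw [hchoose]; ring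
      _ = N * fib (n + 1) * (fib (n + 1) / 2) + N * fib (n + 1) ^ 2 * w := by
        rw [hw, hf, Nat.mul_div_cancel_left f two_pos]; ring
  calc fib ((n + 1) * N)
      ≡ N * fib (n + 1) * fib n ^ (N - 1) + N.choose 2 * fib (n + 1) ^ 2 * fib n ^ (N - 2)
        [MOD fib (n + 1) ^ (r + 2)] := fib_mul_modEq hdvd
    _ = N * fib (n + 1) * (fib n ^ (N - 1) + fib (n + 1) / 2) + N * fib (n + 1) ^ 2 * w := by
        rw [hquad]; ring
    _ ≡ N * fib (n + 1) * (fib n ^ (N - 1) + fib (n + 1) / 2) [MOD fib (n + 1) ^ (r + 2)] := by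
        simpa only [add_zero] using hvanish.add_left _

lemma fib_sq_modEq (n : ℕ) : (fib n : ℤ) ^ 2 ≡ (-1) ^ (n + 1) [ZMOD fib (n + 1)] := by
  have hcassini := Int.fib_succ_mul_fib_pred_sub_fib_sq n
  rw [← Nat.cast_add_one, Int.fib_natCast, Int.fib_natCast, Int.natAbs_natCast] at hcassini
  rw [Int.modEq_iff_dvd]
  exact ⟨-Int.fib (n - 1), by linear_combination hcassini⟩

lemma fib_pow_two_mul_add_one_modEq (n t : ℕ) :
    (fib n : ℤ) ^ (2 * t + 1) ≡ ((-1) ^ (n + 1)) ^ t * fib n [ZMOD fib (n + 1)] := by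
  rw [pow_succ, pow_mul]
  exact ((fib_sq_modEq n).pow t).mul_right _

lemma not_four_dvd_fib_of_odd {n : ℕ} (hn : Odd n) : ¬ 4 ∣ fib n := by
  obtain ⟨m, rfl⟩ := Nat.exists_eq_add_one.2 hn.pos
  intro h4
  have hsq : (fib m : ℤ) ^ 2 ≡ -1 [ZMOD 4] := by
    rw [← hn.neg_one_pow]
    exact (fib_sq_modEq m).of_dvd (mod_cast h4)
  have hne : ∀ x : ZMod 4, x ^ 2 ≠ -1 := by decide
  exact hne (fib m) (by simpa using (ZMod.intCast_eq_intCast_iff _ _ 4).2 hsq)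

lemma neg_one_pow_pow_eq_one_of_fib_eq {n t : ℕ} (ht : fib n = 2 * t + 2) :
    ((-1 : ℤ) ^ n) ^ t = 1 := by
  rcases n.even_or_odd with hn | hn
  · rw [hn.neg_one_pow, one_pow]
  · have h4 := not_four_dvd_fib_of_odd hn
    have hteven : Even t := by grind
    rw [hn.neg_one_pow, hteven.neg_one_pow]

lemma even_fib_of_three_dvd {n : ℕ} (h : 3 ∣ n) : Even (fib n) :=
  even_iff_two_dvd.2 (Nat.fib_dvd 3 n h)

lemma fib_add_two_eq_half_add_half {n : ℕ} (h : 3 ∣ n) :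
    fib (n + 2) = fib n / 2 + fib (n + 3) / 2 := by
  have hn := even_fib_of_three_dvd h
  have h₂ : fib (n + 2) = fib n + fib (n + 1) := Nat.fib_add_two
  have h₃ : fib (n + 3) = fib (n + 1) + fib (n + 2) := Nat.fib_add_two
  grind

lemma fib_pow_add_half_modEq {n : ℕ} (h : 3 ∣ n) (t : ℕ) :
    (fib (n + 2) : ℤ) ^ (2 * t + 1) + (fib (n + 3) / 2 : ℕ) ≡
      ((-1) ^ (n + 3)) ^ t * (fib n / 2 : ℕ) [ZMOD fib (n + 3)] := by
  refine ((fib_pow_two_mul_add_one_modEq (n + 2) t).add_right _).trans ?_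
  rw [fib_add_two_eq_half_add_half h]
  obtain ⟨f, hf⟩ := (even_fib_of_three_dvd (h.add (dvd_refl 3))).two_dvd
  rw [hf, Nat.mul_div_cancel_left f two_pos, Int.modEq_iff_dvd, ← pow_mul]
  push_cast
  rcases neg_one_pow_eq_or ℤ ((n + 3) * t) with hs | hs <;> rw [hs]
  · exact ⟨-1, by ring⟩
  · exact ⟨0, by ring⟩

lemma fib_mul_modEq_of_three_dvd {n r N t : ℕ} (h : 3 ∣ n) (hN : N = 2 * t + 2)
    (hdvd : fib (n + 3) ^ r ∣ N) :
    (fib ((n + 3) * N) : ℤ) ≡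
      N * fib (n + 3) * (((-1) ^ (n + 3)) ^ t * (fib n / 2 : ℕ)) [ZMOD fib (n + 3) ^ (r + 2)] := by
  have hF := even_fib_of_three_dvd (h.add (dvd_refl 3))
  have hmod := fib_mul_modEq_of_even (n := n + 2) hF (by grind) hdvd
  rw [← Int.natCast_modEq_iff, show N - 1 = 2 * t + 1 by lia] at hmod
  push_cast at hmod
  refine hmod.trans ?_
  have hlead : (fib (n + 3) : ℤ) ^ (r + 1) ∣ N * fib (n + 3) := by
    rw [pow_succ]
    exact mul_dvd_mul_right (mod_cast hdvd) _
  rw [pow_succ _ (r + 1)]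
  exact mul_modEq_mul_of_dvd (fib_pow_add_half_modEq h t) hlead

end Fibonacci

section Iteration

open Nat (fib)

variable {n m : ℕ}

lemma G_pos (hn : 0 < n) (k : ℕ) : 0 < G n m k := by
  induction k using G.induct with
  | case1 => exact one_pos
  | case2 => exact pow_pos (Nat.fib_pos.2 hn) m
  | case3 k ih => exact Nat.fib_pos.2 (Nat.mul_pos hn ih)

/-- The factor `± F_{n+3} · F_n / 2` by which one step of the recursion multiplies `G (n + 3) m k`,
to leading order in powers of `F_{n+3}`. The index is shifted by `3` to avoid truncated
subtraction, and the quotient is exact when `3 ∣ n`. -/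
def stepFactor (n : ℕ) : ℤ :=
  (-1) ^ (n + 3) * fib (n + 3) * (fib n / 2 : ℕ)

lemma fib_dvd_stepFactor (n : ℕ) : (fib (n + 3) : ℤ) ∣ stepFactor n :=
  (dvd_mul_left _ _).mul_right _

lemma G_add_two_modEq (h : 3 ∣ n) {e k : ℕ} (he : 2 ≤ e)
    (hdvd : fib (n + 3) ^ e ∣ G (n + 3) m (k + 1)) :
    (G (n + 3) m (k + 2) : ℤ) ≡ stepFactor n * G (n + 3) m (k + 1)
      [ZMOD fib (n + 3) ^ (e + 2)] := by
  have h4 : 4 ∣ G (n + 3) m (k + 1) :=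
    calc 4 = 2 ^ 2 := rfl
      _ ∣ fib (n + 3) ^ e := pow_dvd_pow_of_dvd_of_le
        (even_fib_of_three_dvd (h.add (dvd_refl 3))).two_dvd he
      _ ∣ G (n + 3) m (k + 1) := hdvd
  obtain ⟨u, hu⟩ := h4
  have hpos : 0 < G (n + 3) m (k + 1) := G_pos (by lia) _
  have hsign : ((-1 : ℤ) ^ (n + 3)) ^ (2 * (u - 1) + 1) = (-1) ^ (n + 3) := by
    rw [pow_succ, pow_mul, ← pow_mul (-1), (even_two.mul_left _).neg_one_pow, one_pow, one_mul]
  have hstep := fib_mul_modEq_of_three_dvd (t := 2 * (u - 1) + 1) h (by lia) hdvd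
  rw [hsign] at hstep
  calc (G (n + 3) m (k + 2) : ℤ)
      ≡ G (n + 3) m (k + 1) * fib (n + 3) * ((-1) ^ (n + 3) * (fib n / 2 : ℕ))
        [ZMOD fib (n + 3) ^ (e + 2)] := hstep
    _ = stepFactor n * G (n + 3) m (k + 1) := by rw [stepFactor]; ring

lemma G_add_modEq (h : 3 ∣ n) {e k : ℕ} (he : 2 ≤ e)
    (hdvd : fib (n + 3) ^ e ∣ G (n + 3) m (k + 1)) (j : ℕ) :
    (G (n + 3) m (k + j + 1) : ℤ) ≡ stepFactor n ^ j * G (n + 3) m (k + 1)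
      [ZMOD fib (n + 3) ^ (e + j + 1)] := by
  induction j with
  | zero => simp [Int.ModEq.refl]
  | succ j ih =>
    have hlead : (fib (n + 3) : ℤ) ^ (e + j) ∣ stepFactor n ^ j * G (n + 3) m (k + 1) := by
      rw [add_comm e, pow_add]
      exact mul_dvd_mul (pow_dvd_pow_of_dvd (fib_dvd_stepFactor n) j) (mod_cast hdvd)
    have hdvd' : fib (n + 3) ^ (e + j) ∣ G (n + 3) m (k + j + 1) :=
      mod_cast (ih.of_dvd (pow_dvd_pow _ (Nat.le_succ _))).dvd_iff.2 hlead
    have hscaled := mul_modEq_mul_of_dvd ih (fib_dvd_stepFactor n)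
    rw [← pow_succ', ← mul_assoc, ← pow_succ'] at hscaled
    exact (G_add_two_modEq h (he.trans (Nat.le_add_right e j)) hdvd').trans hscaled

lemma G_modEq_of_two_le (h : 3 ∣ n) (hm : 2 ≤ m) (k : ℕ) :
    (G (n + 3) m (k + 1) : ℤ) ≡
      fib (n + 3) ^ (m + k) * (((-1) ^ (n + 3)) ^ k * (fib n / 2 : ℕ) ^ k)
      [ZMOD fib (n + 3) ^ (m + k + 1)] := by
  have hG : (G (n + 3) m 1 : ℤ) = fib (n + 3) ^ m := Nat.cast_pow _ _
  have hmod := G_add_modEq (k := 0) h hm (dvd_refl (fib (n + 3) ^ m)) k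
  rw [zero_add, zero_add, hG] at hmod
  convert hmod using 1
  rw [stepFactor]
  ring

lemma G_one_two_modEq (h : 3 ∣ n) :
    (G (n + 3) 1 2 : ℤ) ≡ fib (n + 3) ^ 2 * (fib n / 2 : ℕ) [ZMOD fib (n + 3) ^ 3] := by
  have hF : Even (fib (n + 3)) := even_fib_of_three_dvd (h.add (dvd_refl 3))
  have hFpos : 0 < fib (n + 3) := Nat.fib_pos.2 (by lia)
  obtain ⟨t, ht⟩ : ∃ t, fib (n + 3) = 2 * t + 2 := ⟨fib (n + 3) / 2 - 1, by grind⟩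
  have hstep := fib_mul_modEq_of_three_dvd (r := 1) h ht (by rw [pow_one])
  rw [neg_one_pow_pow_eq_one_of_fib_eq ht, one_mul, ← sq] at hstep
  simpa only [G, pow_one] using hstep

lemma G_one_modEq (h : 3 ∣ n) (k : ℕ) :
    (G (n + 3) 1 (k + 2) : ℤ) ≡
      fib (n + 3) ^ (k + 2) * (((-1) ^ (n + 3)) ^ k * (fib n / 2 : ℕ) ^ (k + 1))
      [ZMOD fib (n + 3) ^ (k + 3)] := by
  have htwo := G_one_two_modEq h
  have hdvd : fib (n + 3) ^ 2 ∣ G (n + 3) 1 2 :=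
    mod_cast (htwo.of_dvd (pow_dvd_pow _ (Nat.le_succ 2))).dvd_iff.2 (dvd_mul_right _ _)
  have hmod := G_add_modEq (k := 1) h le_rfl hdvd k
  have hscaled :=
    mul_modEq_mul_of_dvd htwo (pow_dvd_pow_of_dvd (fib_dvd_stepFactor n) k)
  rw [show 1 + k + 1 = k + 2 by lia, show 2 + k + 1 = k + 3 by lia] at hmod
  rw [← pow_add] at hscaled
  convert hmod.trans hscaled using 1
  rw [stepFactor]
  ring

end Iteration

theorem stmt_4 (k n m : ℕ) (hk : 2 ≤ k) (hn : 3 ≤ n) (hm : 1 ≤ m)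
    (h3 : 3 ∣ n) (h : (Odd k ∧ 2 ≤ m) ∨ (Even k ∧ m = 1)) :
    G n m k / Nat.fib n ^ (k + m - 1) ≡ (Nat.fib (n - 3) / 2) ^ (k - 1) [MOD Nat.fib n] := by
  obtain ⟨p, rfl⟩ := Nat.exists_eq_add_of_le' hn
  have hp : 3 ∣ p := (Nat.dvd_add_left (dvd_refl 3)).1 h3
  refine div_modEq_of_modEq_mul (pow_ne_zero _ (Nat.fib_pos.2 (by lia)).ne') ?_
  rw [← pow_succ, ← Int.natCast_modEq_iff, Nat.add_sub_cancel]
  push_cast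
  rcases h with ⟨⟨i, rfl⟩, hm₂⟩ | ⟨hk_even, rfl⟩
  · have hsign : ((-1 : ℤ) ^ (p + 3)) ^ (2 * i) = 1 := by
      rw [← pow_mul, ((even_two_mul i).mul_left _).neg_one_pow]
    have hmod := G_modEq_of_two_le hp hm₂ (2 * i)
    rw [hsign, one_mul] at hmod
    rwa [show 2 * i + 1 + m - 1 = m + 2 * i by lia, Nat.add_sub_cancel]
  · obtain ⟨i, rfl⟩ := Nat.exists_eq_add_of_le' hk
    have hi : Even i := by grind
    have hsign : ((-1 : ℤ) ^ (p + 3)) ^ i = 1 := by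
      rw [← pow_mul, (hi.mul_left _).neg_one_pow]
    have hmod := G_one_modEq hp i
    rwa [hsign, one_mul] at hmod
end

section
/- For every integer n ≥ 3, set r = F_{n·F_{n·F_n}}/F_n^3 (an integer since F_n^3 divides F_{n·F_{n·F_n}}). Then: if 3 ∤ n and 4 ∤ n, r ≡ 1 (mod F_n); if 3 ∤ n and 4 ∣ n, r ≡ F_{n-1} (mod F_n); and if 3 ∣ n, r ≡ (-1)^n · (F_{n-3}/2)^2 (mod F_n), as a congruence of integers. -/
/-!
Write `f = F_n` and `a = F_{n-1}`. Since `xⁿ = f x + a` for both roots of `x² = x + 1`, Binet's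
formula expands `F_{nk}` as `∑ⱼ C(k, j) fʲ a^{k-j} Fⱼ`. When `fⁱ ∣ k` with `i ≥ 1`, the terms with
`j ≥ 3` vanish modulo `f^{i+2}`, which leaves `F_{nk} ≡ k f g(k)` with `g(k) = a^{k-1}` for odd `f`
and `g(k) = a^{k-1} + f/2` for even `f`. Using this at `k = f` and then at `k = K = F_{nf}` gives
`F_{nK} / f³ ≡ g(f) g(K)` modulo `f`. Finally `a² ≡ (-1)ⁿ` by Cassini's identity, so only the
residues of `f` and `K` modulo `4` matter.
-/

section Fibonacci

open Finset
open Nat (fib)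

theorem fib_succ_mul_eq_sum (n k : ℕ) :
    fib ((n + 1) * k) =
      ∑ j ∈ range (k + 1), k.choose j * fib (n + 1) ^ j * fib n ^ (k - j) * fib j := by
  have expand (x : ℝ) (hx : x * fib (n + 1) + fib n = x ^ (n + 1)) : x ^ ((n + 1) * k) =
      ∑ j ∈ range (k + 1), k.choose j * (fib (n + 1) : ℝ) ^ j * fib n ^ (k - j) * x ^ j := by
    rw [pow_mul, ← hx, add_pow]
    exact sum_congr rfl fun j _ ↦ by ring
  rify
  rw [Real.coe_fib_eq, expand _ (Real.goldenRatio_mul_fib_succ_add_fib n),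
    expand _ (Real.goldenConj_mul_fib_succ_add_fib n), ← sum_sub_distrib, sum_div]
  refine sum_congr rfl fun j _ ↦ ?_
  rw [Real.coe_fib_eq j]
  ring

theorem pow_dvd_mul_pow_of_pow_dvd_mul_add_two {f i j x : ℕ} (hj : j ≠ 0)
    (h : f ^ i ∣ x * (j + 2)) : f ^ i ∣ x * f ^ j := by
  rcases eq_or_ne x 0 with rfl | hx
  · simp
  rcases eq_or_ne f 0 with rfl | hf
  · simp [hj]
  rw [← Nat.factorization_prime_le_iff_dvd (by positivity) (by positivity)] at h ⊢
  intro p hp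
  have hp_val : (j + 2).factorization p ≤ j := by
    have two_pow : j + 2 < 2 ^ (j + 1) := by
      obtain ⟨l, rfl⟩ := Nat.exists_eq_add_one_of_ne_zero hj
      have : l < 2 ^ l := Nat.lt_two_pow_self
      rw [pow_succ, pow_succ]
      omega
    have : p ^ (j + 2).factorization p < p ^ (j + 1) :=
      (Nat.ordProj_le p (by omega)).trans_lt (two_pow.trans_le (Nat.pow_le_pow_left hp.two_le _))
    exact Nat.lt_succ_iff.mp ((Nat.pow_lt_pow_iff_right hp.one_lt).mp this)
  specialize h p hp
  simp only [Nat.factorization_mul hx (by positivity : f ^ j ≠ 0),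
    Nat.factorization_mul hx (by omega : j + 2 ≠ 0), Nat.factorization_pow, Finsupp.add_apply,
    Finsupp.smul_apply, smul_eq_mul] at h ⊢
  rcases Nat.eq_zero_or_pos (f.factorization p) with h0 | hpos
  · simp [h0]
  · exact h.trans (Nat.add_le_add_left (hp_val.trans (Nat.le_mul_of_pos_right j hpos)) _)

theorem pow_add_two_dvd_choose_mul_pow_s8 {f i k j : ℕ} (hj : 3 ≤ j) (hk : f ^ i ∣ k) :
    f ^ (i + 2) ∣ k.choose j * f ^ j := by
  obtain ⟨j, rfl⟩ := Nat.exists_eq_add_of_le' (show 2 ≤ j by omega)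
  have h : f ^ i ∣ k.choose (j + 2) * (j + 2) := by
    cases k with
    | zero => simp
    | succ k => exact Nat.add_one_mul_choose_eq k (j + 1) ▸ hk.mul_right _
  simpa only [pow_add, mul_assoc] using
    mul_dvd_mul_right (pow_dvd_mul_pow_of_pow_dvd_mul_add_two (by omega) h) (f ^ 2)

theorem fib_succ_mul_modEq (n : ℕ) {i k : ℕ} (hk : fib (n + 1) ^ i ∣ k) :
    fib ((n + 1) * k) ≡
      k * fib (n + 1) * fib n ^ (k - 1) + k.choose 2 * fib (n + 1) ^ 2 * fib n ^ (k - 2)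
      [MOD fib (n + 1) ^ (i + 2)] := by
  set term : ℕ → ℕ := fun j ↦ k.choose j * fib (n + 1) ^ j * fib n ^ (k - j) * fib j
  have extend : ∑ j ∈ range (k + 1), term j = ∑ j ∈ range (k + 3), term j :=
    sum_subset (range_mono (by omega)) fun j _ hj ↦ by
      simp [term, Nat.choose_eq_zero_of_lt (show k < j by simpa using hj)]
  have tail : fib (n + 1) ^ (i + 2) ∣ ∑ j ∈ range k, term (3 + j) :=
    dvd_sum fun j _ ↦
      ((pow_add_two_dvd_choose_mul_pow_s8 (by omega) hk).mul_right _).mul_right _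
  rw [fib_succ_mul_eq_sum, extend, add_comm k 3, sum_range_add]
  simpa [sum_range_succ, term] using
    (Nat.modEq_zero_iff_dvd.mpr tail).add_left (∑ j ∈ range 3, term j)

theorem two_mul_choose_two (k : ℕ) : 2 * k.choose 2 = k * (k - 1) := by
  rw [Nat.choose_two_right, Nat.mul_div_cancel' (Nat.even_mul_pred_self k).two_dvd]

theorem fib_succ_mul_modEq_of_odd {n : ℕ} (hf : Odd (fib (n + 1))) {i k : ℕ}
    (hk : fib (n + 1) ^ i ∣ k) :
    fib ((n + 1) * k) ≡ k * fib (n + 1) * fib n ^ (k - 1) [MOD fib (n + 1) ^ (i + 2)] := by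
  have hchoose : fib (n + 1) ^ i ∣ k.choose 2 :=
    (hf.coprime_two_right.pow_left i).dvd_of_dvd_mul_left
      (two_mul_choose_two k ▸ hk.mul_right (k - 1))
  have hterm : fib (n + 1) ^ (i + 2) ∣ k.choose 2 * fib (n + 1) ^ 2 * fib n ^ (k - 2) :=
    (pow_add (fib (n + 1)) i 2 ▸ mul_dvd_mul_right hchoose _).mul_right _
  exact (fib_succ_mul_modEq n hk).trans ((Nat.modEq_zero_iff_dvd.mpr hterm).add_left _)

theorem fib_succ_mul_modEq_of_eq_two_mul {n h : ℕ} (hf : fib (n + 1) = 2 * h) {i k : ℕ}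
    (hi : i ≠ 0) (hk : fib (n + 1) ^ i ∣ k) :
    fib ((n + 1) * k) ≡ k * fib (n + 1) * (fib n ^ (k - 1) + h) [MOD fib (n + 1) ^ (i + 2)] := by
  refine (fib_succ_mul_modEq n hk).trans ?_
  rw [mul_add]
  refine Nat.ModEq.add_left _ ?_
  rcases eq_or_ne k 0 with rfl | hk0
  · simp [Nat.ModEq]
  have hk_even : Even k :=
    even_iff_two_dvd.mpr (((Dvd.intro h hf.symm).trans (dvd_pow_self _ hi)).trans hk)
  have ha : Odd (fib n) :=
    Nat.coprime_two_right.mp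
      (Nat.Coprime.coprime_dvd_right (Dvd.intro h hf.symm) (Nat.fib_coprime_fib_succ n))
  have hodd : (k - 1) * fib n ^ (k - 2) ≡ 1 [MOD 2] :=
    Nat.odd_iff.mp ((Nat.Even.sub_odd (by omega) hk_even odd_one).mul ha.pow)
  have hterm : k.choose 2 * fib (n + 1) ^ 2 * fib n ^ (k - 2) =
      k * fib (n + 1) * h * ((k - 1) * fib n ^ (k - 2)) := by
    calc k.choose 2 * fib (n + 1) ^ 2 * fib n ^ (k - 2)
      _ = (2 * k.choose 2) * fib (n + 1) * h * fib n ^ (k - 2) := by rw [hf]; ring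
      _ = _ := by rw [two_mul_choose_two]; ring
  have hdvd : fib (n + 1) ^ (i + 2) ∣ k * fib (n + 1) * h * 2 := by
    have : k * fib (n + 1) * h * 2 = k * fib (n + 1) ^ 2 := by rw [hf]; ring
    rw [this, pow_add]
    exact mul_dvd_mul_right hk _
  rw [hterm]
  simpa only [mul_one, mul_assoc] using (hodd.mul_left' (k * fib (n + 1) * h)).of_dvd hdvd

theorem dvd_and_div_modEq_of_modEq_mul {c m x y : ℕ} (hc : c ≠ 0) (h : x ≡ c * y [MOD c * m]) :
    c ∣ x ∧ x / c ≡ y [MOD m] := by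
  have hdvd : c ∣ x := (h.dvd_iff (dvd_mul_right c m)).mpr (dvd_mul_right c y)
  exact ⟨hdvd, Nat.ModEq.mul_left_cancel' hc ((Nat.mul_div_cancel' hdvd).symm ▸ h)⟩

theorem apply_apply_div_pow_three_modEq {f : ℕ} (hf : f ≠ 0) {u g : ℕ → ℕ}
    (hu : ∀ i k, i ≠ 0 → f ^ i ∣ k → u k ≡ k * f * g k [MOD f ^ (i + 2)]) :
    u (u f) / f ^ 3 ≡ g f * g (u f) [MOD f] := by
  have inner : u f ≡ f ^ 2 * g f [MOD f ^ 2 * f] := by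
    simpa only [sq, pow_succ, pow_zero, one_mul] using hu 1 f one_ne_zero (pow_one f).dvd
  obtain ⟨hdvd, hdiv⟩ := dvd_and_div_modEq_of_modEq_mul (pow_ne_zero 2 hf) inner
  have outer : u (u f) ≡ f ^ 3 * (u f / f ^ 2 * g (u f)) [MOD f ^ 3 * f] := by
    have hmul : u f * f * g (u f) = f ^ 3 * (u f / f ^ 2 * g (u f)) := by
      nth_rewrite 1 [← Nat.mul_div_cancel' hdvd]
      ring
    exact hmul ▸ hu 2 (u f) two_ne_zero hdvd
  exact (dvd_and_div_modEq_of_modEq_mul (pow_ne_zero 3 hf) outer).2.trans (hdiv.mul_right _)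

/-- The quotient `F_{n F_{n F_n}} / F_n³`; the division is exact for `n ≠ 0`, and the
value at `n = 0` is `0`. -/
def fibTowerQuotient (n : ℕ) : ℕ :=
  fib (n * fib (n * fib n)) / fib n ^ 3

theorem fibTowerQuotient_succ_modEq_of_odd {n : ℕ} (hf : Odd (fib (n + 1))) :
    fibTowerQuotient (n + 1) ≡
      fib n ^ (fib (n + 1) - 1) * fib n ^ (fib ((n + 1) * fib (n + 1)) - 1) [MOD fib (n + 1)] :=
  apply_apply_div_pow_three_modEq (u := fun k ↦ fib ((n + 1) * k)) (g := fun k ↦ fib n ^ (k - 1))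
    hf.pos.ne' fun _ _ _ hk ↦ fib_succ_mul_modEq_of_odd hf hk

theorem fibTowerQuotient_succ_modEq_of_eq_two_mul {n h : ℕ} (hf : fib (n + 1) = 2 * h) :
    fibTowerQuotient (n + 1) ≡
      (fib n ^ (fib (n + 1) - 1) + h) * (fib n ^ (fib ((n + 1) * fib (n + 1)) - 1) + h)
      [MOD fib (n + 1)] :=
  apply_apply_div_pow_three_modEq (u := fun k ↦ fib ((n + 1) * k))
    (g := fun k ↦ fib n ^ (k - 1) + h) (Nat.fib_pos.mpr n.succ_pos).ne'
    fun _ _ hi hk ↦ fib_succ_mul_modEq_of_eq_two_mul hf hi hk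

theorem fib_dvd_fib_iff {m n : ℕ} (hm : 2 < m) : fib m ∣ fib n ↔ m ∣ n := by
  refine ⟨fun h ↦ ?_, Nat.fib_dvd m n⟩
  have hgcd : fib (m.gcd n) = fib m := by rw [Nat.fib_gcd, Nat.gcd_eq_left h]
  have hle : m ≤ m.gcd n := by
    by_contra! hlt
    rcases le_or_gt 2 (m.gcd n) with h2 | h2
    · exact ((Nat.fib_lt_fib h2).mpr hlt).ne hgcd
    · have := (Nat.fib_mono h2.le).trans_lt ((Nat.fib_lt_fib le_rfl).mpr hm)
      exact this.ne hgcd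
  exact Nat.gcd_eq_left_iff_dvd.mp (le_antisymm (Nat.gcd_le_left n (by omega)) hle)

theorem even_fib_iff {n : ℕ} : Even (fib n) ↔ 3 ∣ n :=
  even_iff_two_dvd.trans (fib_dvd_fib_iff (m := 3) (by norm_num))

theorem odd_fib_iff {n : ℕ} : Odd (fib n) ↔ ¬ 3 ∣ n :=
  Nat.not_even_iff_odd.symm.trans even_fib_iff.not

theorem three_dvd_fib_iff {n : ℕ} : 3 ∣ fib n ↔ 4 ∣ n :=
  fib_dvd_fib_iff (m := 4) (by norm_num)

-- An odd-indexed Fibonacci number is a sum of two coprime squares.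
theorem fib_mod_four_of_odd {n : ℕ} (hn : Odd n) : fib n % 4 = 1 ∨ fib n % 4 = 2 := by
  obtain ⟨k, rfl⟩ := hn
  have not_both_even : ¬ (Even (fib (k + 1)) ∧ Even (fib k)) := by
    simp only [even_fib_iff]
    omega
  rw [Nat.fib_two_mul_add_one]
  rcases Nat.even_or_odd' (fib (k + 1)) with ⟨x, hx | hx⟩ <;>
  rcases Nat.even_or_odd' (fib k) with ⟨y, hy | hy⟩
  · exact absurd ⟨⟨x, by omega⟩, ⟨y, by omega⟩⟩ not_both_even
  all_goals
    rw [hx, hy]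
    ring_nf
    omega

theorem fib_sq_eq_neg_one_pow (n : ℕ) : (fib n : ZMod (fib (n + 1))) ^ 2 = (-1) ^ (n + 1) := by
  have cassini : ((fib n + fib (n + 1)) * fib n - fib (n + 1) ^ 2 : ℤ) = (-1) ^ (n + 1) := by
    have pred : ((n + 1 : ℕ) : ℤ) - 1 = n := by simp
    have := Int.fib_succ_mul_fib_pred_sub_fib_sq (n + 1 : ℕ)
    rwa [pred, ← Nat.cast_succ, Int.natAbs_natCast, Int.fib_natCast, Int.fib_natCast,
      Int.fib_natCast, Nat.fib_add_two, Nat.cast_add] at this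
  have := congrArg (Int.cast : ℤ → ZMod (fib (n + 1))) cassini
  push_cast at this
  rw [← this, ZMod.natCast_self]
  ring

theorem pow_eq_one_of_sq_eq_neg_one_pow {R : Type*} [Monoid R] [HasDistribNeg R] {x : R} {n k : ℕ}
    (hx : x ^ 2 = (-1) ^ n) (hk : Even k) (hkn : Odd n → 4 ∣ k) : x ^ k = 1 := by
  rcases Nat.even_or_odd n with hn | hn
  · obtain ⟨l, rfl⟩ := hk.two_dvd
    rw [pow_mul, hx, hn.neg_one_pow, one_pow]
  · obtain ⟨l, rfl⟩ := hkn hn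
    rw [show 4 * l = 2 * (2 * l) by ring, pow_mul, hx, hn.neg_one_pow, pow_mul, neg_one_sq, one_pow]

theorem fib_pow_fib_sub_one_eq_one {n N : ℕ} (hN : ¬ 3 ∣ N) (hnN : Odd (n + 1) → Odd N) :
    (fib n : ZMod (fib (n + 1))) ^ (fib N - 1) = 1 := by
  have hodd : Odd (fib N) := odd_fib_iff.mpr hN
  refine pow_eq_one_of_sq_eq_neg_one_pow (fib_sq_eq_neg_one_pow n) (hodd.tsub_odd odd_one)
    fun hn ↦ ?_
  have := fib_mod_four_of_odd (hnN hn)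
  have := Nat.odd_iff.mp hodd
  omega

theorem fibTowerQuotient_modEq_one {n : ℕ} (h3 : ¬ 3 ∣ n) (h4 : ¬ 4 ∣ n) :
    fibTowerQuotient n ≡ 1 [MOD fib n] := by
  obtain ⟨n, rfl⟩ := Nat.exists_eq_add_one_of_ne_zero (show n ≠ 0 by rintro rfl; simp at h3)
  have hf : Odd (fib (n + 1)) := odd_fib_iff.mpr h3
  have hindex : ¬ 3 ∣ (n + 1) * fib (n + 1) := by
    rw [Nat.prime_three.dvd_mul, three_dvd_fib_iff]
    exact not_or.mpr ⟨h3, h4⟩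
  have hquot := (ZMod.natCast_eq_natCast_iff _ _ _).mpr (fibTowerQuotient_succ_modEq_of_odd hf)
  push_cast at hquot
  rw [fib_pow_fib_sub_one_eq_one h3 id, fib_pow_fib_sub_one_eq_one hindex (·.mul hf),
    one_mul] at hquot
  exact (ZMod.natCast_eq_natCast_iff _ _ _).mp (hquot.trans Nat.cast_one.symm)

theorem fibTowerQuotient_modEq_fib_sub_one {n : ℕ} (h3 : ¬ 3 ∣ n) (h4 : 4 ∣ n) :
    fibTowerQuotient n ≡ fib (n - 1) [MOD fib n] := by
  obtain ⟨n, rfl⟩ := Nat.exists_eq_add_one_of_ne_zero (show n ≠ 0 by rintro rfl; simp at h3)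
  have hf : Odd (fib (n + 1)) := odd_fib_iff.mpr h3
  obtain ⟨l, hl⟩ : Even (fib ((n + 1) * fib (n + 1))) :=
    even_fib_iff.mpr ((three_dvd_fib_iff.mpr h4).mul_left _)
  have hpos : 0 < fib ((n + 1) * fib (n + 1)) := Nat.fib_pos.mpr (Nat.mul_pos n.succ_pos hf.pos)
  have outer : (fib n : ZMod (fib (n + 1))) ^ (fib ((n + 1) * fib (n + 1)) - 1) = fib n := by
    rw [show fib ((n + 1) * fib (n + 1)) - 1 = 2 * (l - 1) + 1 by omega, pow_succ,
      pow_eq_one_of_sq_eq_neg_one_pow (fib_sq_eq_neg_one_pow n) (even_two_mul _)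
        fun hn ↦ by have := Nat.odd_iff.mp hn; omega,
      one_mul]
  have hquot := (ZMod.natCast_eq_natCast_iff _ _ _).mpr (fibTowerQuotient_succ_modEq_of_odd hf)
  push_cast at hquot
  rw [fib_pow_fib_sub_one_eq_one h3 id, outer, one_mul] at hquot
  exact (ZMod.natCast_eq_natCast_iff _ _ _).mp hquot

theorem fib_pow_fib_succ_sub_one_eq_self {n : ℕ} (h3 : 3 ∣ n + 1) :
    (fib n : ZMod (fib (n + 1))) ^ (fib (n + 1) - 1) = fib n := by
  obtain ⟨l, hl⟩ := even_fib_iff.mpr h3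
  have hpos : 0 < fib (n + 1) := Nat.fib_pos.mpr n.succ_pos
  have hmod : Odd (n + 1) → 4 ∣ 2 * (l - 1) := fun hn ↦ by
    have := fib_mod_four_of_odd hn
    omega
  rw [show fib (n + 1) - 1 = 2 * (l - 1) + 1 by omega, pow_succ,
    pow_eq_one_of_sq_eq_neg_one_pow (fib_sq_eq_neg_one_pow n) (even_two_mul _) hmod, one_mul]

theorem fib_pow_sub_one_of_four_dvd (n : ℕ) {k : ℕ} (hk : k ≠ 0) (h4 : 4 ∣ k) :
    (fib n : ZMod (fib (n + 1))) ^ (k - 1) = (-1) ^ (n + 1) * fib n := by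
  obtain ⟨l, rfl⟩ := h4
  rw [show 4 * l - 1 = 4 * (l - 1) + 2 + 1 by omega, pow_succ, pow_add, fib_sq_eq_neg_one_pow,
    pow_eq_one_of_sq_eq_neg_one_pow (fib_sq_eq_neg_one_pow n) ⟨2 * (l - 1), by ring⟩
      fun _ ↦ dvd_mul_right 4 _, one_mul]

theorem four_dvd_fib_mul_fib {n : ℕ} (h3 : 3 ∣ n) : 4 ∣ fib (n * fib n) := by
  have hindex : 6 ∣ n * fib n := mul_dvd_mul h3 (even_fib_iff.mpr h3).two_dvd
  exact (show 4 ∣ fib 6 by decide).trans (Nat.fib_dvd _ _ hindex)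

theorem fibTowerQuotient_add_three_modEq {n : ℕ} (h3 : 3 ∣ n) :
    (fibTowerQuotient (n + 3) : ℤ) ≡ (-1) ^ (n + 3) * ((fib n / 2 : ℕ) : ℤ) ^ 2
      [ZMOD fib (n + 3)] := by
  have h3' : 3 ∣ n + 3 := by omega
  obtain ⟨h, hh⟩ := (even_fib_iff.mpr h3').two_dvd
  set b := fib n / 2
  have hsplit : fib (n + 2) = h + b := by
    have := Nat.fib_add_two (n := n)
    have : fib (n + 3) = fib (n + 1) + fib (n + 2) := Nat.fib_add_two
    omega
  have two_mul_h : (2 * h : ZMod (fib (n + 3))) = 0 := by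
    simpa [hh] using ZMod.natCast_self (fib (n + 3))
  have neg_one_pow_mul_h : ((-1) ^ (n + 3) * h : ZMod (fib (n + 3))) = h := by
    rcases neg_one_pow_eq_or (ZMod (fib (n + 3))) (n + 3) with hs | hs
    · rw [hs, one_mul]
    · rw [hs]
      linear_combination -two_mul_h
  have hpos : 0 < fib ((n + 3) * fib (n + 3)) := by simp
  have hquot := (ZMod.natCast_eq_natCast_iff _ _ _).mpr
    (fibTowerQuotient_succ_modEq_of_eq_two_mul (n := n + 2) hh)
  push_cast at hquot
  rw [fib_pow_fib_succ_sub_one_eq_self h3',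
    fib_pow_sub_one_of_four_dvd _ hpos.ne' (four_dvd_fib_mul_fib h3'), hsplit] at hquot
  refine (ZMod.intCast_eq_intCast_iff _ _ _).mp ?_
  push_cast at hquot ⊢
  rw [hquot]
  linear_combination (b + 2 * h) * neg_one_pow_mul_h +
    (b + (-1) ^ (n + 3) * b + 2 * h) * two_mul_h

end Fibonacci

theorem stmt_8 (n : ℕ) (hn : 3 ≤ n)
    (r : ℕ) (hr : r = Nat.fib (n * Nat.fib (n * Nat.fib n)) / Nat.fib n ^ 3) :
    (¬ (3 ∣ n) → ¬ (4 ∣ n) → r ≡ 1 [MOD Nat.fib n]) ∧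
    (¬ (3 ∣ n) → 4 ∣ n → r ≡ Nat.fib (n - 1) [MOD Nat.fib n]) ∧
    (3 ∣ n →
      (r : ℤ) ≡ (-1) ^ n * ((Nat.fib (n - 3) / 2 : ℕ) : ℤ) ^ 2 [ZMOD (Nat.fib n : ℤ)]) := by
  obtain rfl : r = fibTowerQuotient n := hr
  refine ⟨fibTowerQuotient_modEq_one, fibTowerQuotient_modEq_fib_sub_one, fun h3 ↦ ?_⟩
  obtain ⟨n, rfl⟩ := Nat.exists_eq_add_of_le' hn
  exact fibTowerQuotient_add_three_modEq (Nat.dvd_add_self_right.mp h3)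
end
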